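/- Let d ≥ 3 be an integer and let h : [0, 1/π] → [0, 1] be the inverse function of g. There exists a constant C > 0 such that for every μ ≥ 2 and every integer l with 0 ≤ l < μ − d/2 + 1, | Σ_{k} ( μ·h((k − 1/4)/μ) − l − (d−3)/2 ) − ∫_{l+(d−3)/2}^{μ} μ·g(t/μ) dt + (1/4)(μ − l − (d−3)/2) | ≤ C μ^{1/3}, where the sum is over all integers k ≥ 1 with k − 1/4 ≤ μ·g((l + d/2 − 1)/μ). -/

import Mathlib

open Real Set

/-- The function `g(t) = (√(1-t²) - t arccos t)/π`. -/
noncomputable def gfun (t : ℝ) : ℝ := (Real.sqrt (1 - t ^ 2) - t * Real.arccos t) / π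

/-!
Put `G t = μ g(t/μ)`, a decreasing convex function on `[a, μ]`, where `a = l + (d - 3)/2`. Its
inverse `H`, continued by the constant `a` beyond `G a`, is decreasing and convex on `[0, ∞)`, and
exchanging the axes turns `∫ G` into the area `∫ (H - a)`. For a convex function the midpoint and
trapezoidal rules err in opposite directions, so the sum of `H - a` over `3/4 + ℕ` differs from
`∫ (H - a) - (H 0 - a)/4` by at most half the drop `H 0 - H (3/4)`. Since `g t ≍ (1 - t)^(3/2)` near
`t = 1`, this drop is `O(μ^(1/3))`. The cutoff `G (a + 1/2)` discards at most one nonzero term,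
of size at most `1/2`, because `|g'| ≤ 1/2` gives `G a ≤ G (a + 1/2) + 1/4`.
-/

open MeasureTheory

section HermiteHadamard

variable {f : ℝ → ℝ} {a b : ℝ}

theorem intervalIntegrable_comp_reflect (hf : IntervalIntegrable f volume a b) :
    IntervalIntegrable (fun x ↦ f (a + b - x)) volume a b := by
  simpa using (hf.comp_sub_left (a + b)).symm

theorem integral_add_comp_reflect (hf : IntervalIntegrable f volume a b) :
    ∫ x in a..b, (f x + f (a + b - x)) = 2 * ∫ x in a..b, f x := by
  rw [intervalIntegral.integral_add hf (intervalIntegrable_comp_reflect hf),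
    intervalIntegral.integral_comp_sub_left]
  simp only [add_sub_cancel_left, add_sub_cancel_right]
  ring

theorem two_mul_map_midpoint_le_add_reflect_of_convexOn (hf : ConvexOn ℝ (Icc a b) f) {x : ℝ}
    (hx : x ∈ Icc a b) : 2 * f ((a + b) / 2) ≤ f x + f (a + b - x) := by
  have hx' : a + b - x ∈ Icc a b := ⟨by linarith [hx.2], by linarith [hx.1]⟩
  have hmid := hf.2 hx hx' (by norm_num : (0 : ℝ) ≤ 1 / 2) (by norm_num : (0 : ℝ) ≤ 1 / 2)
    (by norm_num)
  simp only [smul_eq_mul] at hmid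
  rw [show 1 / 2 * x + 1 / 2 * (a + b - x) = (a + b) / 2 by ring] at hmid
  linarith

theorem add_reflect_le_add_endpoints_of_convexOn (hf : ConvexOn ℝ (Icc a b) f) {x : ℝ}
    (hx : x ∈ Icc a b) : f x + f (a + b - x) ≤ f a + f b := by
  have hab : a ≤ b := hx.1.trans hx.2
  rw [← segment_eq_Icc hab] at hx
  obtain ⟨p, q, hp, hq, hpq, rfl⟩ := hx
  have hx := hf.2 (left_mem_Icc.2 hab) (right_mem_Icc.2 hab) hp hq hpq
  have hx' := hf.2 (left_mem_Icc.2 hab) (right_mem_Icc.2 hab) hq hp (by linarith)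
  have hreflect : a + b - (p • a + q • b) = q • a + p • b := by
    simp only [smul_eq_mul]
    linear_combination (-a - b) * hpq
  rw [hreflect]
  simp only [smul_eq_mul] at hx hx' ⊢
  linear_combination hx + hx' + (f a + f b) * hpq

theorem mul_map_midpoint_le_integral_of_convexOn (hab : a ≤ b) (hf : ConvexOn ℝ (Icc a b) f)
    (hint : IntervalIntegrable f volume a b) :
    (b - a) * f ((a + b) / 2) ≤ ∫ x in a..b, f x := by
  have hmono : ∫ _ in a..b, 2 * f ((a + b) / 2) ≤ ∫ x in a..b, (f x + f (a + b - x)) :=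
    intervalIntegral.integral_mono_on hab intervalIntegrable_const
      (hint.add (intervalIntegrable_comp_reflect hint))
      fun _ hx ↦ two_mul_map_midpoint_le_add_reflect_of_convexOn hf hx
  rw [integral_add_comp_reflect hint, intervalIntegral.integral_const, smul_eq_mul] at hmono
  linarith

theorem integral_le_mul_add_endpoints_div_two_of_convexOn (hab : a ≤ b)
    (hf : ConvexOn ℝ (Icc a b) f) (hint : IntervalIntegrable f volume a b) :
    ∫ x in a..b, f x ≤ (b - a) * ((f a + f b) / 2) := by
  have hmono : ∫ x in a..b, (f x + f (a + b - x)) ≤ ∫ _ in a..b, (f a + f b) :=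
    intervalIntegral.integral_mono_on hab (hint.add (intervalIntegrable_comp_reflect hint))
      intervalIntegrable_const fun _ hx ↦ add_reflect_le_add_endpoints_of_convexOn hf hx
  rw [integral_add_comp_reflect hint, intervalIntegral.integral_const, smul_eq_mul] at hmono
  linarith

end HermiteHadamard

section UnitSteps

variable {f : ℝ → ℝ} {x : ℝ} {n : ℕ}

theorem Icc_unit_step_subset {j : ℕ} (hj : j < n) :
    Icc (x + j) (x + (j + 1 : ℕ)) ⊆ Icc x (x + n) := by
  have hj' : ((j + 1 : ℕ) : ℝ) ≤ n := by exact_mod_cast hj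
  exact Icc_subset_Icc (by linarith [j.cast_nonneg (α := ℝ)]) (by linarith)

theorem intervalIntegrable_unit_step (hint : IntervalIntegrable f volume x (x + n)) {j : ℕ}
    (hj : j < n) : IntervalIntegrable f volume (x + j) (x + (j + 1 : ℕ)) := by
  refine hint.mono_set ?_
  rw [uIcc_of_le (by simp), uIcc_of_le (by simp)]
  exact Icc_unit_step_subset hj

theorem sum_integral_unit_steps (hint : IntervalIntegrable f volume x (x + n)) :
    ∑ j ∈ Finset.range n, ∫ y in (x + j)..(x + (j + 1 : ℕ)), f y = ∫ y in x..(x + n), f y := by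
  simpa using intervalIntegral.sum_integral_adjacent_intervals (a := fun j : ℕ ↦ x + j)
    fun _ hj ↦ intervalIntegrable_unit_step hint hj

theorem sum_midpoints_le_integral_of_convexOn (hf : ConvexOn ℝ (Icc x (x + n)) f)
    (hint : IntervalIntegrable f volume x (x + n)) :
    ∑ j ∈ Finset.range n, f (x + 1 / 2 + j) ≤ ∫ y in x..(x + n), f y := by
  rw [← sum_integral_unit_steps hint]
  refine Finset.sum_le_sum fun j hj ↦ ?_
  have hj := Finset.mem_range.1 hj
  have hmid := mul_map_midpoint_le_integral_of_convexOn (by simp)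
    (hf.subset (Icc_unit_step_subset hj) (convex_Icc _ _)) (intervalIntegrable_unit_step hint hj)
  rw [show (x + j + (x + (j + 1 : ℕ))) / 2 = x + 1 / 2 + j by push_cast; ring] at hmid
  simpa using hmid

theorem integral_le_sum_trapezoids_of_convexOn (hf : ConvexOn ℝ (Icc x (x + n)) f)
    (hint : IntervalIntegrable f volume x (x + n)) :
    ∫ y in x..(x + n), f y ≤ ∑ j ∈ Finset.range n, f (x + j) - f x / 2 + f (x + n) / 2 := by
  have htrapezoid : ∀ j ∈ Finset.range n, ∫ y in (x + j)..(x + (j + 1 : ℕ)), f y ≤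
      f (x + j) + (f (x + (j + 1 : ℕ)) / 2 - f (x + j) / 2) := fun j hj ↦ by
    have hj := Finset.mem_range.1 hj
    refine (integral_le_mul_add_endpoints_div_two_of_convexOn (by simp)
      (hf.subset (Icc_unit_step_subset hj) (convex_Icc _ _))
      (intervalIntegrable_unit_step hint hj)).trans_eq ?_
    push_cast
    ring
  have htelescope := Finset.sum_range_sub (fun j : ℕ ↦ f (x + j) / 2) n
  rw [Nat.cast_zero, add_zero] at htelescope
  calc ∫ y in x..(x + n), f y
      = ∑ j ∈ Finset.range n, ∫ y in (x + j)..(x + (j + 1 : ℕ)), f y :=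
        (sum_integral_unit_steps hint).symm
    _ ≤ ∑ j ∈ Finset.range n, (f (x + j) + (f (x + (j + 1 : ℕ)) / 2 - f (x + j) / 2)) :=
        Finset.sum_le_sum htrapezoid
    _ = ∑ j ∈ Finset.range n, f (x + j) - f x / 2 + f (x + n) / 2 := by
        rw [Finset.sum_add_distrib, htelescope]
        ring

end UnitSteps

section ConvexAntitone

variable {F : ℝ → ℝ} {θ : ℝ} {M : ℕ}

theorem intervalIntegrable_of_antitoneOn_Icc {b c x y : ℝ} (hF : AntitoneOn F (Icc b c))
    (hx : x ∈ Icc b c) (hy : y ∈ Icc b c) : IntervalIntegrable F volume x y :=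
  (hF.mono (uIcc_subset_Icc hx hy)).intervalIntegrable

theorem sum_le_integral_sub_of_convexOn_of_antitoneOn (hconv : ConvexOn ℝ (Icc 0 (θ + M)) F)
    (hanti : AntitoneOn F (Icc 0 (θ + M))) (hnonneg : 0 ≤ F (θ + M)) (hθ : 1 / 2 ≤ θ) :
    ∑ j ∈ Finset.range M, F (θ + j) ≤
      (∫ y in 0..(θ + M), F y) - (θ - 1 / 2) * F θ := by
  have hend : θ + M ∈ Icc 0 (θ + M) := ⟨by linarith, le_rfl⟩
  have hleft : θ - 1 / 2 ∈ Icc 0 (θ + M) := ⟨by linarith, by linarith⟩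
  have hright : θ - 1 / 2 + M ∈ Icc 0 (θ + M) := ⟨by linarith, by linarith⟩
  have hzero : (0 : ℝ) ∈ Icc 0 (θ + M) := ⟨le_rfl, by linarith⟩
  have hint {x y : ℝ} (hx : x ∈ Icc 0 (θ + M)) (hy : y ∈ Icc 0 (θ + M)) :=
    intervalIntegrable_of_antitoneOn_Icc hanti hx hy
  have hmidpoints : ∑ j ∈ Finset.range M, F (θ + j) ≤
      ∫ y in (θ - 1 / 2)..(θ - 1 / 2 + M), F y := by
    simpa using sum_midpoints_le_integral_of_convexOn
      (hconv.subset (Icc_subset_Icc hleft.1 hright.2) (convex_Icc _ _)) (hint hleft hright)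
  have hhead : (θ - 1 / 2) * F θ ≤ ∫ y in 0..(θ - 1 / 2), F y := by
    have hmono : ∫ _ in 0..(θ - 1 / 2), F θ ≤ ∫ y in 0..(θ - 1 / 2), F y :=
      intervalIntegral.integral_mono_on hleft.1 intervalIntegrable_const (hint hzero hleft)
        fun y hy ↦ hanti ⟨hy.1, by linarith [hy.2]⟩ ⟨by linarith, by linarith⟩ (by linarith [hy.2])
    simpa using hmono
  have htail : 0 ≤ ∫ y in (θ - 1 / 2 + M)..(θ + M), F y :=
    intervalIntegral.integral_nonneg hright.2 fun y hy ↦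
      hnonneg.trans (hanti ⟨hright.1.trans hy.1, hy.2⟩ hend hy.2)
  have hsplit_left :=
    intervalIntegral.integral_add_adjacent_intervals (hint hzero hleft) (hint hleft hright)
  have hsplit_right :=
    intervalIntegral.integral_add_adjacent_intervals (hint hzero hright) (hint hright hend)
  linarith

theorem integral_sub_le_sum_of_convexOn_of_antitoneOn (hconv : ConvexOn ℝ (Icc 0 (θ + M)) F)
    (hanti : AntitoneOn F (Icc 0 (θ + M))) (hθ : 0 ≤ θ) :
    (∫ y in 0..(θ + M), F y) - θ * F 0 + F θ / 2 - F (θ + M) / 2 ≤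
      ∑ j ∈ Finset.range M, F (θ + j) := by
  have hmem : θ ∈ Icc 0 (θ + M) := ⟨hθ, by linarith⟩
  have hend : θ + M ∈ Icc 0 (θ + M) := ⟨by linarith, le_rfl⟩
  have hzero : (0 : ℝ) ∈ Icc 0 (θ + M) := ⟨le_rfl, by linarith⟩
  have hint {x y : ℝ} (hx : x ∈ Icc 0 (θ + M)) (hy : y ∈ Icc 0 (θ + M)) :=
    intervalIntegrable_of_antitoneOn_Icc hanti hx hy
  have htrapezoids := integral_le_sum_trapezoids_of_convexOn
    (hconv.subset (Icc_subset_Icc hθ le_rfl) (convex_Icc _ _)) (hint hmem hend)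
  have hhead : ∫ y in 0..θ, F y ≤ θ * F 0 := by
    have hmono : ∫ y in 0..θ, F y ≤ ∫ _ in 0..θ, F 0 :=
      intervalIntegral.integral_mono_on hθ (hint hzero hmem) intervalIntegrable_const
        fun y hy ↦ hanti hzero ⟨hy.1, hy.2.trans hmem.2⟩ hy.1
    simpa using hmono
  have hsplit := intervalIntegral.integral_add_adjacent_intervals (hint hzero hmem) (hint hmem hend)
  linarith

theorem abs_sum_sub_integral_add_le_of_convexOn_of_antitoneOn
    (hconv : ConvexOn ℝ (Icc 0 (θ + M)) F) (hanti : AntitoneOn F (Icc 0 (θ + M)))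
    (hnonneg : 0 ≤ F (θ + M)) (hθ : θ ∈ Icc (1 / 2) 1) :
    |∑ j ∈ Finset.range M, F (θ + j) - (∫ y in 0..(θ + M), F y) + (θ - 1 / 2) * F 0| ≤
      (F 0 - F θ + F (θ + M)) / 2 := by
  have hupper := sum_le_integral_sub_of_convexOn_of_antitoneOn hconv hanti hnonneg hθ.1
  have hlower := integral_sub_le_sum_of_convexOn_of_antitoneOn hconv hanti (by linarith [hθ.1])
  have hdrop : F θ ≤ F 0 :=
    hanti ⟨le_rfl, by linarith [hθ.1]⟩ ⟨by linarith [hθ.1], by linarith⟩ (by linarith [hθ.1])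
  have hscaled_drop : (θ - 1 / 2) * (F 0 - F θ) ≤ 1 / 2 * (F 0 - F θ) := by
    gcongr
    linarith [hθ.2]
  rw [abs_le]
  constructor <;> linarith

end ConvexAntitone

/-- `H` is the generalized inverse on `[0, ∞)` of the function `G` on `[a, b]`: `H y` is the least
point of `[a, b]` at which `G` is at most `y`. It is encoded as an adjunction, which forces
`H y = a` for `y ≥ G a`. -/
structure IsGeneralizedInverse (G H : ℝ → ℝ) (a b : ℝ) : Prop where
  mem_Icc : ∀ {y : ℝ}, 0 ≤ y → H y ∈ Icc a b
  le_iff : ∀ {y t : ℝ}, 0 ≤ y → t ∈ Icc a b → (H y ≤ t ↔ G t ≤ y)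

theorem isGeneralizedInverse_of_rightInvOn {G K : ℝ → ℝ} {a b : ℝ} (hab : a ≤ b)
    (hG : StrictAntiOn G (Icc a b)) (hmaps : MapsTo K (Icc 0 (G a)) (Icc a b))
    (hright : RightInvOn K G (Icc 0 (G a))) :
    IsGeneralizedInverse G (fun y ↦ if y ≤ G a then K y else a) a b where
  mem_Icc {y} hy := by
    split_ifs with hya
    · exact hmaps ⟨hy, hya⟩
    · exact left_mem_Icc.2 hab
  le_iff {y t} hy ht := by
    split_ifs with hya
    · rw [← hG.le_iff_ge ht (hmaps ⟨hy, hya⟩), hright ⟨hy, hya⟩]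
    · have hGt : G t ≤ G a := hG.antitoneOn (left_mem_Icc.2 hab) ht ht.1
      exact iff_of_true ht.1 (hGt.trans (not_le.1 hya).le)

namespace IsGeneralizedInverse

variable {G H : ℝ → ℝ} {a b : ℝ}

theorem lt_iff (hH : IsGeneralizedInverse G H a b) {y t : ℝ} (hy : 0 ≤ y) (ht : t ∈ Icc a b) :
    t < H y ↔ y < G t := by
  simpa only [not_le] using (hH.le_iff hy ht).not

theorem map_le (hH : IsGeneralizedInverse G H a b) {y : ℝ} (hy : 0 ≤ y) : G (H y) ≤ y :=
  (hH.le_iff hy (hH.mem_Icc hy)).1 le_rfl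

theorem left_le_right (hH : IsGeneralizedInverse G H a b) : a ≤ b :=
  (hH.mem_Icc le_rfl).1.trans (hH.mem_Icc le_rfl).2

theorem eq_left (hH : IsGeneralizedInverse G H a b) {y : ℝ} (hy : 0 ≤ y) (hay : G a ≤ y) :
    H y = a :=
  ((hH.le_iff hy (left_mem_Icc.2 hH.left_le_right)).2 hay).antisymm (hH.mem_Icc hy).1

theorem map_zero_eq_right (hH : IsGeneralizedInverse G H a b) (hG : StrictAntiOn G (Icc a b))
    (hb : 0 ≤ G b) : H 0 = b := by
  have hH₀ := hH.mem_Icc le_rfl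
  refine hH₀.2.antisymm ((hG.le_iff_ge hH₀ (right_mem_Icc.2 hH.left_le_right)).1 ?_)
  exact (hH.map_le le_rfl).trans hb

theorem antitoneOn (hH : IsGeneralizedInverse G H a b) : AntitoneOn H (Ici 0) := fun _ hx _ hy hxy ↦
  (hH.le_iff hy (hH.mem_Icc hx)).2 ((hH.map_le hx).trans hxy)

theorem convexOn (hH : IsGeneralizedInverse G H a b) (hG : ConvexOn ℝ (Icc a b) G) :
    ConvexOn ℝ (Ici 0) H := by
  refine ⟨convex_Ici 0, fun x hx y hy p q hp hq hpq ↦ ?_⟩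
  have hHx := hH.mem_Icc hx
  have hHy := hH.mem_Icc hy
  rw [hH.le_iff (convex_Ici 0 hx hy hp hq hpq) (convex_Icc a b hHx hHy hp hq hpq)]
  calc G (p • H x + q • H y) ≤ p • G (H x) + q • G (H y) := hG.2 hHx hHy hp hq hpq
    _ ≤ p • x + q • y := by
      gcongr
      · exact hH.map_le hx
      · exact hH.map_le hy

theorem antitoneOn_of_nonneg (hH : IsGeneralizedInverse G H a b)
    (hG : ∀ t ∈ Icc a b, 0 ≤ G t) : AntitoneOn G (Icc a b) := fun s hs _ ht hst ↦
  (hH.le_iff (hG s hs) ht).1 (((hH.le_iff (hG s hs) hs).2 le_rfl).trans hst)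

theorem superlevel_inter_Ioc (hH : IsGeneralizedInverse G H a b) {y : ℝ} (hy : 0 ≤ y) :
    {t | y < G t} ∩ Ioc a b = Ioo a (H y) := by
  ext t
  constructor
  · rintro ⟨hyt, hat, htb⟩
    exact ⟨hat, (hH.lt_iff hy ⟨hat.le, htb⟩).2 hyt⟩
  · rintro ⟨hat, htH⟩
    have htb : t ≤ b := htH.le.trans (hH.mem_Icc hy).2
    exact ⟨(hH.lt_iff hy ⟨hat.le, htb⟩).1 htH, hat, htb⟩

theorem integral_eq (hH : IsGeneralizedInverse G H a b) (hG : ∀ t ∈ Icc a b, 0 ≤ G t) {c : ℝ}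
    (hc : G a ≤ c) : ∫ t in a..b, G t = ∫ y in 0..c, (H y - a) := by
  have hab := hH.left_le_right
  have hc₀ : 0 ≤ c := (hG a (left_mem_Icc.2 hab)).trans hc
  have hint : IntervalIntegrable G volume a b := by
    refine AntitoneOn.intervalIntegrable ?_
    rw [uIcc_of_le hab]
    exact hH.antitoneOn_of_nonneg hG
  have hnonneg : 0 ≤ᵐ[volume.restrict (Ioc a b)] G :=
    (ae_restrict_mem measurableSet_Ioc).mono fun t ht ↦ hG t (Ioc_subset_Icc_self ht)
  have hmeasure : ∀ y ∈ Ioi (0 : ℝ),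
      (volume.restrict (Ioc a b)).real {t | y < G t} = H y - a := fun y hy ↦ by
    rw [measureReal_restrict_apply' measurableSet_Ioc, hH.superlevel_inter_Ioc (le_of_lt hy),
      Real.volume_real_Ioo_of_le (hH.mem_Icc (le_of_lt hy)).1]
  rw [intervalIntegral.integral_of_le hab, intervalIntegral.integral_of_le hc₀,
    hint.1.integral_eq_integral_meas_lt hnonneg, setIntegral_congr_fun measurableSet_Ioi hmeasure]
  refine setIntegral_eq_of_subset_of_forall_sdiff_eq_zero measurableSet_Ioi
    Ioc_subset_Ioi_self fun y hy ↦ ?_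
  have hcy : c < y := not_le.1 fun hyc ↦ hy.2 ⟨hy.1, hyc⟩
  exact sub_eq_zero.2 (hH.eq_left (le_of_lt hy.1) (hc.trans hcy.le))

theorem abs_sum_sub_integral_add_le (hH : IsGeneralizedInverse G H a b)
    (hconv : ConvexOn ℝ (Icc a b) G) (hnonneg : ∀ t ∈ Icc a b, 0 ≤ G t) {θ : ℝ} {M : ℕ}
    (hθ : θ ∈ Icc (1 / 2) 1) (hM : G a ≤ θ + M) :
    |∑ j ∈ Finset.range M, (H (θ + j) - a) - (∫ t in a..b, G t) + (θ - 1 / 2) * (H 0 - a)| ≤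
      (H 0 - H θ) / 2 := by
  have hend : (0 : ℝ) ≤ θ + M := (hnonneg a (left_mem_Icc.2 hH.left_le_right)).trans hM
  have hvanish : H (θ + M) = a := hH.eq_left hend hM
  have hanti : AntitoneOn (fun y ↦ H y - a) (Icc 0 (θ + M)) := fun x hx y hy hxy ↦
    sub_le_sub_right (hH.antitoneOn hx.1 hy.1 hxy) a
  have hconvH : ConvexOn ℝ (Icc 0 (θ + M)) fun y ↦ H y - a :=
    ((hH.convexOn hconv).subset Icc_subset_Ici_self (convex_Icc _ _)).sub
      (concaveOn_const a (convex_Icc _ _))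
  have hbound := abs_sum_sub_integral_add_le_of_convexOn_of_antitoneOn hconvH hanti
    (sub_nonneg.2 hvanish.ge) hθ
  rw [hH.integral_eq hnonneg hM]
  refine hbound.trans_eq ?_
  rw [hvanish]
  ring

end IsGeneralizedInverse

section Gfun

theorem hasDerivAt_gfun {t : ℝ} (ht : t ∈ Ioo (-1) 1) : HasDerivAt gfun (-arccos t / π) t := by
  have hpos : 0 < 1 - t ^ 2 := by nlinarith [ht.1, ht.2]
  have hsq : HasDerivAt (fun t : ℝ ↦ 1 - t ^ 2) (-(2 * t)) t := by
    simpa using (hasDerivAt_pow 2 t).const_sub 1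
  have harccos := hasDerivAt_arccos ht.1.ne' ht.2.ne
  refine (((hsq.sqrt hpos.ne').sub ((hasDerivAt_id t).mul harccos)).div_const π).congr_deriv ?_
  have hsqrt : √(1 - t ^ 2) ≠ 0 := (Real.sqrt_pos.2 hpos).ne'
  simp only [id]
  field_simp
  ring

theorem hasDerivWithinAt_gfun {t : ℝ} (ht : t ∈ interior (Icc (-1 : ℝ) 1)) :
    HasDerivWithinAt gfun (-arccos t / π) (interior (Icc (-1) 1)) t :=
  (hasDerivAt_gfun (interior_Icc (a := (-1 : ℝ)) ▸ ht)).hasDerivWithinAt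

theorem continuous_gfun : Continuous gfun := by
  have := Real.continuous_arccos
  unfold gfun
  fun_prop

theorem gfun_one : gfun 1 = 0 := by simp [gfun]

theorem gfun_zero : gfun 0 = 1 / π := by simp [gfun]

theorem strictAntiOn_gfun : StrictAntiOn gfun (Icc (-1) 1) := by
  refine strictAntiOn_of_hasDerivWithinAt_neg (convex_Icc _ _) continuous_gfun.continuousOn
    (fun t ht ↦ hasDerivWithinAt_gfun ht) fun t ht ↦ ?_
  rw [interior_Icc] at ht
  exact div_neg_of_neg_of_pos (neg_neg_of_pos (arccos_pos.2 ht.2)) pi_pos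

theorem gfun_nonneg {t : ℝ} (ht : t ∈ Icc (-1) 1) : 0 ≤ gfun t :=
  gfun_one ▸ strictAntiOn_gfun.antitoneOn ht (right_mem_Icc.2 (by norm_num)) ht.2

theorem convexOn_gfun : ConvexOn ℝ (Icc (-1) 1) gfun := by
  refine MonotoneOn.convexOn_of_deriv (convex_Icc _ _) continuous_gfun.continuousOn
    (fun t ht ↦ (hasDerivWithinAt_gfun ht).differentiableWithinAt) fun s hs t ht hst ↦ ?_
  rw [interior_Icc] at hs ht
  rw [(hasDerivAt_gfun hs).deriv, (hasDerivAt_gfun ht).deriv]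
  have := antitone_arccos hst
  gcongr

theorem gfun_sub_gfun_le {s t : ℝ} (hs : 0 ≤ s) (hst : s ≤ t) (ht : t ≤ 1) :
    gfun s - gfun t ≤ (t - s) / 2 := by
  have hderiv : ∀ x ∈ interior (Icc (0 : ℝ) 1), HasDerivAt gfun (-arccos x / π) x := fun x hx ↦ by
    rw [interior_Icc] at hx
    exact hasDerivAt_gfun ⟨by linarith [hx.1], hx.2⟩
  have hslope : ∀ x ∈ interior (Icc (0 : ℝ) 1), -1 / 2 ≤ deriv gfun x := fun x hx ↦ by
    rw [(hderiv x hx).deriv, div_le_div_iff₀ two_pos pi_pos]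
    rw [interior_Icc] at hx
    linarith [arccos_le_pi_div_two.2 hx.1.le]
  have hmvt := (convex_Icc 0 1).mul_sub_le_image_sub_of_le_deriv continuous_gfun.continuousOn
    (fun x hx ↦ (hderiv x hx).differentiableAt.differentiableWithinAt) hslope
    s ⟨hs, hst.trans ht⟩ t ⟨hs.trans hst, ht⟩ hst
  linarith

theorem sqrt_two_mul_one_sub_le_arccos {x : ℝ} (hx : x ∈ Icc (-1) 1) :
    √(2 * (1 - x)) ≤ arccos x := by
  refine Real.sqrt_le_iff.2 ⟨arccos_nonneg x, ?_⟩
  have hcos := one_sub_sq_div_two_le_cos (x := arccos x)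
  rw [cos_arccos hx.1 hx.2] at hcos
  linarith

theorem hasDerivAt_two_mul_one_sub_rpow (x : ℝ) :
    HasDerivAt (fun t : ℝ ↦ (2 * (1 - t)) ^ (3 / 2 : ℝ) / (3 * π)) (-√(2 * (1 - x)) / π) x := by
  have hlinear : HasDerivAt (fun t : ℝ ↦ 2 * (1 - t)) (-2) x := by
    simpa using ((hasDerivAt_id x).const_sub 1).const_mul 2
  refine ((hlinear.rpow_const (p := 3 / 2) (Or.inr (by norm_num))).div_const _).congr_deriv ?_
  rw [sqrt_eq_rpow, show (3 / 2 : ℝ) - 1 = 1 / 2 by norm_num]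
  field_simp

theorem two_mul_one_sub_rpow_div_le_gfun {t : ℝ} (ht : t ∈ Icc (-1) 1) :
    (2 * (1 - t)) ^ (3 / 2 : ℝ) / (3 * π) ≤ gfun t := by
  have hanti : AntitoneOn (fun x ↦ gfun x - (2 * (1 - x)) ^ (3 / 2 : ℝ) / (3 * π))
      (Icc (-1) 1) := by
    refine antitoneOn_of_hasDerivWithinAt_nonpos (convex_Icc _ _)
      (continuous_gfun.sub (continuous_iff_continuousAt.2 fun x ↦
        (hasDerivAt_two_mul_one_sub_rpow x).continuousAt)).continuousOn
      (fun x hx ↦ (hasDerivWithinAt_gfun hx).sub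
        (hasDerivAt_two_mul_one_sub_rpow x).hasDerivWithinAt) fun x hx ↦ ?_
    have harccos := sqrt_two_mul_one_sub_le_arccos (interior_subset hx)
    rw [← sub_div]
    exact div_nonpos_of_nonpos_of_nonneg (by linarith) pi_pos.le
  have hcompare := hanti ht (right_mem_Icc.2 (by norm_num)) ht.2
  simpa [gfun_one, zero_rpow] using hcompare

end Gfun

/-- The function `t ↦ μ g(t/μ)`, whose integral is compared with the sum of its inverse. -/
noncomputable def scaledGfun (μ t : ℝ) : ℝ := μ * gfun (t / μ)

section ScaledGfun

variable {μ : ℝ}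

theorem div_mem_Icc_neg_one_one (hμ : 0 < μ) {t : ℝ} (ht : t ∈ Icc (-μ) μ) :
    t / μ ∈ Icc (-1) 1 :=
  ⟨by rw [le_div_iff₀ hμ]; linarith [ht.1], (div_le_one hμ).2 ht.2⟩

theorem scaledGfun_nonneg (hμ : 0 < μ) {t : ℝ} (ht : t ∈ Icc (-μ) μ) : 0 ≤ scaledGfun μ t :=
  mul_nonneg hμ.le (gfun_nonneg (div_mem_Icc_neg_one_one hμ ht))

theorem strictAntiOn_scaledGfun (hμ : 0 < μ) : StrictAntiOn (scaledGfun μ) (Icc (-μ) μ) :=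
  fun _ hs _ ht hst ↦ mul_lt_mul_of_pos_left (strictAntiOn_gfun (div_mem_Icc_neg_one_one hμ hs)
    (div_mem_Icc_neg_one_one hμ ht) (div_lt_div_of_pos_right hst hμ)) hμ

theorem convexOn_scaledGfun (hμ : 0 < μ) : ConvexOn ℝ (Icc (-μ) μ) (scaledGfun μ) := by
  have hcomp := (convexOn_gfun.comp_linearMap (LinearMap.mulRight ℝ μ⁻¹)).smul hμ.le
  exact hcomp.subset (fun t ht ↦ div_mem_Icc_neg_one_one hμ ht) (convex_Icc _ _)

theorem scaledGfun_sub_scaledGfun_le (hμ : 0 < μ) {s t : ℝ} (hs : 0 ≤ s) (hst : s ≤ t)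
    (ht : t ≤ μ) : scaledGfun μ s - scaledGfun μ t ≤ (t - s) / 2 := by
  have hlip := gfun_sub_gfun_le (div_nonneg hs hμ.le) (div_le_div_of_nonneg_right hst hμ.le)
    ((div_le_one hμ).2 ht)
  calc scaledGfun μ s - scaledGfun μ t = μ * (gfun (s / μ) - gfun (t / μ)) := (mul_sub ..).symm
    _ ≤ μ * ((t / μ - s / μ) / 2) := by gcongr
    _ = (t - s) / 2 := by field_simp

theorem sub_le_of_scaledGfun_le (hμ : 0 < μ) {t y : ℝ} (ht : t ∈ Icc (-μ) μ)
    (hy : scaledGfun μ t ≤ y) : μ - t ≤ (3 * π * y) ^ (2 / 3 : ℝ) / 2 * μ ^ (1 / 3 : ℝ) := by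
  have htμ := div_mem_Icc_neg_one_one hμ ht
  have hbase : 0 ≤ 2 * (1 - t / μ) := by linarith [htμ.2]
  have hpow : (2 * (1 - t / μ)) ^ (3 / 2 : ℝ) ≤ 3 * π * y / μ := by
    have hgfun : gfun (t / μ) ≤ y / μ := (le_div_iff₀' hμ).2 hy
    have hlower := (two_mul_one_sub_rpow_div_le_gfun htμ).trans hgfun
    rw [div_le_iff₀ (by positivity)] at hlower
    exact hlower.trans_eq (by ring)
  have hy₀ : 0 ≤ y := (scaledGfun_nonneg hμ ht).trans hy
  have hroot : 2 * (1 - t / μ) ≤ (3 * π * y / μ) ^ (2 / 3 : ℝ) := by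
    refine (rpow_le_rpow (rpow_nonneg hbase _) hpow (by norm_num : (0 : ℝ) ≤ 2 / 3)).trans' ?_
    rw [← rpow_mul hbase]
    norm_num
  have hμpow : μ / μ ^ (2 / 3 : ℝ) = μ ^ (1 / 3 : ℝ) := by
    rw [← rpow_one_sub' hμ.le (by norm_num)]
    norm_num
  rw [div_rpow (by positivity) hμ.le] at hroot
  calc μ - t = μ / 2 * (2 * (1 - t / μ)) := by field_simp
    _ ≤ μ / 2 * ((3 * π * y) ^ (2 / 3 : ℝ) / μ ^ (2 / 3 : ℝ)) := by gcongr
    _ = (3 * π * y) ^ (2 / 3 : ℝ) / 2 * (μ / μ ^ (2 / 3 : ℝ)) := by ring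
    _ = (3 * π * y) ^ (2 / 3 : ℝ) / 2 * μ ^ (1 / 3 : ℝ) := by rw [hμpow]

end ScaledGfun

theorem tsum_ite_one_le_and_sub_le (f : ℕ → ℝ) (c B : ℝ) :
    ∑' k : ℕ, (if 1 ≤ k ∧ (k : ℝ) - c ≤ B then f k else 0) =
      ∑ j ∈ Finset.range ⌊B + c⌋₊, f (j + 1) := by
  have hiff : ∀ k : ℕ, (1 ≤ k ∧ (k : ℝ) - c ≤ B) ↔ k ∈ Finset.Ico 1 (⌊B + c⌋₊ + 1) := fun k ↦ by
    rw [Finset.mem_Ico, Nat.lt_succ_iff]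
    exact and_congr_right fun hk ↦ by rw [Nat.le_floor_iff' (by omega), sub_le_iff_le_add]
  simp only [hiff]
  rw [tsum_eq_sum (s := Finset.Ico 1 (⌊B + c⌋₊ + 1)) fun k hk ↦ if_neg hk,
    Finset.sum_congr rfl fun k hk ↦ if_pos hk, Finset.sum_Ico_eq_sum_range]
  simp only [Nat.add_sub_cancel, add_comm 1]

/-- The inverse `y ↦ μ h(y/μ)` of `scaledGfun μ` on `[a, μ]`, continued by the constant `a` to the
right of its natural domain `[0, scaledGfun μ a]`. -/
noncomputable def truncatedInverse (h : ℝ → ℝ) (μ a y : ℝ) : ℝ :=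
  if y ≤ scaledGfun μ a then μ * h (y / μ) else a

section MainSum

variable {h : ℝ → ℝ} {μ a : ℝ}

theorem isGeneralizedInverse_truncatedInverse
    (h_maps : MapsTo h (Icc 0 (1 / π)) (Icc 0 1))
    (h_right_inv : RightInvOn h gfun (Icc 0 (1 / π))) (hμ : 0 < μ) (ha : a ∈ Icc 0 μ) :
    IsGeneralizedInverse (scaledGfun μ) (truncatedInverse h μ a) a μ := by
  have haμ : a / μ ∈ Icc (-1) 1 := div_mem_Icc_neg_one_one hμ ⟨by linarith [ha.1], ha.2⟩
  have hdom : ∀ y ∈ Icc 0 (scaledGfun μ a), y / μ ∈ Icc 0 (1 / π) ∧ y / μ ≤ gfun (a / μ) := by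
    intro y hy
    have hy' : y / μ ≤ gfun (a / μ) := (div_le_iff₀' hμ).2 hy.2
    have hgfun : gfun (a / μ) ≤ gfun 0 := strictAntiOn_gfun.antitoneOn (by norm_num) haμ
      (div_nonneg ha.1 hμ.le)
    exact ⟨⟨div_nonneg hy.1 hμ.le, gfun_zero ▸ hy'.trans hgfun⟩, hy'⟩
  refine isGeneralizedInverse_of_rightInvOn ha.2
    ((strictAntiOn_scaledGfun hμ).mono (Icc_subset_Icc_left (by linarith [ha.1])))
    (fun y hy ↦ ?_) fun y hy ↦ ?_
  · obtain ⟨hy, hya⟩ := hdom y hy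
    have hh := h_maps hy
    have hah : a / μ ≤ h (y / μ) := by
      rwa [← strictAntiOn_gfun.le_iff_ge ⟨by linarith [hh.1], hh.2⟩ haμ, h_right_inv hy]
    exact ⟨(div_le_iff₀' hμ).1 hah, mul_le_of_le_one_right hμ.le hh.2⟩
  · simp only [scaledGfun]
    rw [mul_div_cancel_left₀ _ hμ.ne', h_right_inv (hdom y hy).1, mul_div_cancel₀ _ hμ.ne']

theorem tsum_eq_sum_truncatedInverse (hμ : 0 < μ) (ha : 0 ≤ a) (haμ : a + 1 / 2 ≤ μ) :
    ∑' k : ℕ, (if 1 ≤ k ∧ (k : ℝ) - 1 / 4 ≤ scaledGfun μ (a + 1 / 2) then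
        μ * h ((k - 1 / 4) / μ) - a else 0) =
      ∑ j ∈ Finset.range ⌊scaledGfun μ (a + 1 / 2) + 1 / 4⌋₊,
        (truncatedInverse h μ a (3 / 4 + j) - a) := by
  rw [tsum_ite_one_le_and_sub_le fun k ↦ μ * h ((k - 1 / 4) / μ) - a]
  refine Finset.sum_congr rfl fun j hj ↦ ?_
  have hj : ((j + 1 : ℕ) : ℝ) ≤ scaledGfun μ (a + 1 / 2) + 1 / 4 :=
    (Nat.le_floor_iff' (by omega)).1 (Finset.mem_range.1 hj)
  have hGa : scaledGfun μ (a + 1 / 2) ≤ scaledGfun μ a :=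
    (strictAntiOn_scaledGfun hμ).antitoneOn ⟨by linarith, by linarith⟩ ⟨by linarith, haμ⟩
      (by linarith)
  push_cast at hj ⊢
  rw [truncatedInverse, if_pos (by linarith), show (j : ℝ) + 1 - 1 / 4 = 3 / 4 + j by ring]

theorem sub_truncatedInverse_three_quarters_le
    (hH : IsGeneralizedInverse (scaledGfun μ) (truncatedInverse h μ a) a μ) (hμ : 0 < μ)
    (ha : 0 ≤ a) : μ - truncatedInverse h μ a (3 / 4) ≤ 2 * μ ^ (1 / 3 : ℝ) := by
  have hmem := hH.mem_Icc (y := 3 / 4) (by norm_num)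
  have hconst : (3 * π * (3 / 4)) ^ (2 / 3 : ℝ) ≤ 4 := calc
    (3 * π * (3 / 4)) ^ (2 / 3 : ℝ) ≤ ((2 : ℝ) ^ (3 : ℝ)) ^ (2 / 3 : ℝ) := by
      refine rpow_le_rpow (by positivity) ?_ (by norm_num)
      norm_num
      linarith [pi_lt_d2]
    _ = 4 := by
      rw [← rpow_mul (by norm_num)]
      norm_num
  refine (sub_le_of_scaledGfun_le hμ ⟨by linarith [hmem.1], hmem.2⟩
    (hH.map_le (by norm_num))).trans ?_
  gcongr
  linarith

theorem euler_maclaurin_main_sum_general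
    (h_maps : MapsTo h (Icc 0 (1 / π)) (Icc 0 1))
    (h_right_inv : RightInvOn h gfun (Icc 0 (1 / π))) (ha : 0 ≤ a)
    (haμ : a + 1 / 2 ≤ μ) :
    |(∑' k : ℕ, if 1 ≤ k ∧ (k : ℝ) - 1 / 4 ≤ scaledGfun μ (a + 1 / 2) then
          μ * h ((k - 1 / 4) / μ) - a else 0) -
        (∫ t in a..μ, scaledGfun μ t) + 1 / 4 * (μ - a)| ≤ 2 * μ ^ (1 / 3 : ℝ) := by
  have hμ : 0 < μ := by linarith
  have hH := isGeneralizedInverse_truncatedInverse h_maps h_right_inv hμ ⟨ha, by linarith⟩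
  have hsubset : Icc a μ ⊆ Icc (-μ) μ := Icc_subset_Icc_left (by linarith)
  have hnonneg : ∀ t ∈ Icc a μ, 0 ≤ scaledGfun μ t := fun t ht ↦ scaledGfun_nonneg hμ (hsubset ht)
  have hmem : a + 1 / 2 ∈ Icc a μ := ⟨by linarith, haμ⟩
  set N := ⌊scaledGfun μ (a + 1 / 2) + 1 / 4⌋₊ with hN
  have hN_lt : scaledGfun μ (a + 1 / 2) + 1 / 4 < N + 1 := Nat.lt_floor_add_one _
  have hGa : scaledGfun μ a ≤ 3 / 4 + (N + 1 : ℕ) := by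
    push_cast
    linarith [scaledGfun_sub_scaledGfun_le hμ ha hmem.1 haμ]
  have hextra : truncatedInverse h μ a (3 / 4 + N) ∈ Icc a (a + 1 / 2) :=
    ⟨(hH.mem_Icc (by positivity)).1, (hH.le_iff (by positivity) hmem).2 (by linarith)⟩
  have hbound := hH.abs_sum_sub_integral_add_le ((convexOn_scaledGfun hμ).subset hsubset
    (convex_Icc _ _)) hnonneg (θ := 3 / 4) (by norm_num) hGa
  rw [Finset.sum_range_succ, hH.map_zero_eq_right ((strictAntiOn_scaledGfun hμ).mono hsubset)
    (hnonneg μ ⟨by linarith, le_rfl⟩)] at hbound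
  have hdrop := sub_truncatedInverse_three_quarters_le hH hμ ha
  have hhalf : 1 / 2 ≤ μ ^ (1 / 3 : ℝ) := calc
    (1 / 2 : ℝ) ≤ (1 / 2 : ℝ) ^ (1 / 3 : ℝ) :=
      self_le_rpow_of_le_one (by norm_num) (by norm_num) (by norm_num)
    _ ≤ μ ^ (1 / 3 : ℝ) := rpow_le_rpow (by norm_num) (by linarith) (by norm_num)
  rw [tsum_eq_sum_truncatedInverse hμ ha haμ, ← hN]
  rw [abs_le] at hbound ⊢
  constructor <;> linarith [hextra.1, hextra.2]

end MainSum

/-- the Euler–Maclaurin evaluation of the main sum, with error `O(μ^{1/3})`. -/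
theorem euler_maclaurin_main_sum (d : ℕ) (hd : 3 ≤ d) (h : ℝ → ℝ)
    (h_maps : ∀ y ∈ Set.Icc (0:ℝ) (1 / π), h y ∈ Set.Icc (0:ℝ) 1)
    (h_right_inv : ∀ y ∈ Set.Icc (0:ℝ) (1 / π), gfun (h y) = y)
    (h_left_inv : ∀ t ∈ Set.Icc (0:ℝ) 1, h (gfun t) = t) :
    ∃ C : ℝ, 0 < C ∧ ∀ μ : ℝ, 2 ≤ μ → ∀ l : ℕ, (l : ℝ) < μ - (d : ℝ) / 2 + 1 →
      |(∑' k : ℕ, if 1 ≤ k ∧ (k : ℝ) - 1 / 4 ≤ μ * gfun (((l : ℝ) + (d : ℝ) / 2 - 1) / μ) then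
            μ * h (((k : ℝ) - 1 / 4) / μ) - (l : ℝ) - ((d : ℝ) - 3) / 2
          else 0) -
          (∫ t in ((l : ℝ) + ((d : ℝ) - 3) / 2)..μ, μ * gfun (t / μ)) +
          (1 / 4) * (μ - (l : ℝ) - ((d : ℝ) - 3) / 2)| ≤ C * μ ^ ((1 : ℝ) / 3) := by
  refine ⟨2, two_pos, fun μ _ l hl ↦ ?_⟩
  have hd' : (3 : ℝ) ≤ d := by exact_mod_cast hd
  have hmain := euler_maclaurin_main_sum_general h_maps h_right_inv (μ := μ)
    (a := l + ((d : ℝ) - 3) / 2) (by positivity) (by linarith)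
  rw [show l + ((d : ℝ) - 3) / 2 + 1 / 2 = l + (d : ℝ) / 2 - 1 by ring] at hmain
  simp only [sub_sub]
  exact hmain
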